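/- For every binary string w : List Bool, the three denominators around node w are pairwise coprime: writing q₁ = ((MT w).1).den, q₂ = ((MT w).2).den and q₃ = (mf w).den, one has gcd(q₁, q₂) = gcd(q₂, q₃) = gcd(q₁, q₃) = 1. -/

import Mathlib

/-!
For neighbouring fractions `x = p₁/q₁` and `y = p₂/q₂` of the tree put `d = p₂q₁ - p₁q₂`. The
invariant is that `d > 0`, that `q₁` and `q₂` are coprime, and that `(q₁, q₂, d)` solves the Markov
equation `q₁² + q₂² + d² = 3q₁q₂d`. The last two parts make `q₁, q₂, d` pairwise coprime.

The mediant of `x` and `y` is `(p₁q₁ + p₂q₂) / (q₁² + q₂²)`, and the factor cancelled in reducing it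
is exactly `d`. The denominator equals `d q₃` with `q₃ = 3q₁q₂ - d`, the other root of the Markov
equation. The numerator is also divisible by `d`, since
`q₁(p₁q₁ + p₂q₂) = p₁(q₁² + q₂²) + q₂d` and `d` is coprime to `q₁`. Writing it as `d p₃` gives
`p₃q₁ - p₁q₃ = q₂` and `p₂q₃ - p₃q₂ = q₁`, so a common divisor of `p₃` and `q₃` divides both `q₁` and
`q₂`: the fraction `p₃/q₃` is reduced. The same two identities say that the values of `d` for
`(x, p₃/q₃)` and `(p₃/q₃, y)` are `q₂` and `q₁`, so the invariant passes to both children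
(`MarkovPair.step`).
-/

/-- The Springborn mediant of two rationals. -/
def sm (x y : ℚ) : ℚ :=
  ((x.num * x.den + y.num * y.den : ℤ) : ℚ) / ((x.den ^ 2 + y.den ^ 2 : ℕ) : ℚ)

/-- The Markov fraction tree: `MT []  = (0, 1/2)`, and for `MT w = (x, y)`,
`MT (w ++ [false]) = (x, sm x y)` and `MT (w ++ [true]) = (sm x y, y)`. -/
def MT (w : List Bool) : ℚ × ℚ :=
  w.foldl (fun p b => if b then (sm p.1 p.2, p.2) else (p.1, sm p.1 p.2)) (0, 1/2)

/-- The Markov fraction at node `w`. -/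
def mf (w : List Bool) : ℚ := sm (MT w).1 (MT w).2

/-- If two entries `a`, `b` of a Markov triple are coprime, then so are `a` and the third entry `d`:
the equation reads `d² ≡ -b²` modulo `a`. -/
lemma isCoprime_of_markov {a b d : ℤ} (h : IsCoprime a b)
    (hm : a ^ 2 + b ^ 2 + d ^ 2 = 3 * a * b * d) : IsCoprime a d := by
  have h1 : IsCoprime a (-b ^ 2 + a * (3 * b * d - a)) :=
    (h.pow_right (n := 2)).neg_right.add_mul_left_right _
  have h2 : -b ^ 2 + a * (3 * b * d - a) = d ^ 2 := by linear_combination -hm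
  rw [h2] at h1
  exact (IsCoprime.pow_right_iff (by norm_num)).1 h1

/-- The invariant of the Markov fraction tree: the denominators of `x < y` are coprime and form a
Markov triple together with the determinant `d = y.num * x.den - x.num * y.den`. -/
structure MarkovPair (x y : ℚ) (d : ℤ) : Prop where
  det : y.num * x.den - x.num * y.den = d
  pos : 0 < d
  coprime : IsCoprime (x.den : ℤ) (y.den : ℤ)
  markov : (x.den : ℤ) ^ 2 + (y.den : ℤ) ^ 2 + d ^ 2 = 3 * x.den * y.den * d

/-- The mediant of a Markov pair forms a Markov pair with either of the two fractions. -/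
lemma MarkovPair.step {x y : ℚ} {d : ℤ} (h : MarkovPair x y d) :
    MarkovPair x (sm x y) y.den ∧ MarkovPair (sm x y) y x.den := by
  obtain ⟨hd, hpos, hc, hm⟩ := h
  have hx : (0 : ℤ) < x.den := by exact_mod_cast x.den_pos
  have hy : (0 : ℤ) < y.den := by exact_mod_cast y.den_pos
  have hsm : sm x y = ((x.num * x.den + y.num * y.den : ℤ) : ℚ) /
      (((x.den : ℤ) ^ 2 + (y.den : ℤ) ^ 2 : ℤ) : ℚ) := by
    simp [sm]
  generalize ha : (x.den : ℤ) = a at *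
  generalize hb : (y.den : ℤ) = b at *
  have hxd : IsCoprime a d := isCoprime_of_markov hc hm
  have hden : a ^ 2 + b ^ 2 = d * (3 * a * b - d) := by linear_combination hm
  obtain ⟨p, hp⟩ : d ∣ x.num * a + y.num * b :=
    hxd.symm.dvd_of_dvd_mul_left
      ⟨x.num * (3 * a * b - d) + b, by linear_combination x.num * hden + b * hd⟩
  obtain ⟨q, hq⟩ : ∃ q, q = 3 * a * b - d := ⟨_, rfl⟩
  rw [← hq] at hden
  have hqpos : 0 < q := by
    have : 0 < d * q := by rw [← hden]; positivity
    exact pos_of_mul_pos_right this hpos.le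
  have e1 : p * a - x.num * q = b :=
    mul_left_cancel₀ hpos.ne' (by linear_combination -a * hp + x.num * hden + b * hd)
  have e2 : y.num * q - p * b = a :=
    mul_left_cancel₀ hpos.ne' (by linear_combination b * hp - y.num * hden + a * hd)
  have hpq : IsCoprime p q := by
    obtain ⟨u, v, huv⟩ := hc
    exact ⟨v * a - u * b, u * y.num - v * x.num, by
      linear_combination huv + v * e1 + u * e2⟩
  have hval : sm x y = (p : ℚ) / (q : ℚ) := by
    rw [hsm, hp, hden]
    push_cast
    exact mul_div_mul_left _ _ (by exact_mod_cast hpos.ne')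
  have hpq' : p.natAbs.Coprime q.natAbs := Int.isCoprime_iff_gcd_eq_one.1 hpq
  have hn : (sm x y).num = p := by rw [hval]; exact Rat.num_div_eq_of_coprime hqpos hpq'
  have hdn : ((sm x y).den : ℤ) = q := by rw [hval]; exact Rat.den_div_eq_of_coprime hqpos hpq'
  have hmx : a ^ 2 + q ^ 2 + b ^ 2 = 3 * a * q * b := by subst hq; linear_combination hm
  -- The new triple `(a, b, q)` is again Markov and keeps the coprime entries `a` and `b`.
  have haq : IsCoprime a q := isCoprime_of_markov hc (by linear_combination hmx)
  have hbq : IsCoprime b q := isCoprime_of_markov hc.symm (by linear_combination hmx)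
  refine ⟨⟨?_, hy, ?_, ?_⟩, ⟨?_, hx, ?_, ?_⟩⟩ <;> simp only [hn, hdn, ha, hb]
  · exact e1
  · exact haq
  · exact hmx
  · exact e2
  · exact hbq.symm
  · linear_combination hmx

lemma markovPair_MT (w : List Bool) : ∃ d, MarkovPair (MT w).1 (MT w).2 d := by
  induction w using List.reverseRecOn with
  | nil =>
    refine ⟨1, (?_ : MarkovPair 0 (1 / 2) 1)⟩
    have h1 : (1 / 2 : ℚ).num = 1 := by norm_num
    have h2 : (1 / 2 : ℚ).den = 2 := by norm_num
    constructor <;> (try simp only [h1, h2]) <;> norm_num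
  | append_singleton w b ih =>
    obtain ⟨d, hd⟩ := ih
    have e : MT (w ++ [b]) = if b then (sm (MT w).1 (MT w).2, (MT w).2)
        else ((MT w).1, sm (MT w).1 (MT w).2) := by
      simp [MT, List.foldl_append]
    rw [e]
    cases b
    · exact ⟨_, hd.step.1⟩
    · exact ⟨_, hd.step.2⟩

/-- The three denominators around any node of the Markov fraction tree are
pairwise coprime. -/
theorem markov_denominators_pairwise_coprime (w : List Bool) :
    Nat.gcd ((MT w).1).den ((MT w).2).den = 1 ∧
    Nat.gcd ((MT w).2).den (mf w).den = 1 ∧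
    Nat.gcd ((MT w).1).den (mf w).den = 1 := by
  obtain ⟨d, hd⟩ := markovPair_MT w
  exact ⟨Nat.isCoprime_iff_coprime.1 hd.coprime,
    (Nat.isCoprime_iff_coprime.1 hd.step.2.coprime).symm,
    Nat.isCoprime_iff_coprime.1 hd.step.1.coprime⟩
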